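/- Assume (H1)–(H4). Let y be a solution of (E) belonging to the class S₂ = {y > 0, L₁y < 0, L₂y > 0, L₃y < 0} on [t₁, ∞) for some t₁ ≥ t₀. If ∫_{t₀}^∞ q(s)·π(σ(s))^γ ds = ∞, then for every constant k > 0 there exists t₂ ≥ t₁ such that y(t) ≤ k·π(t) for all t ≥ t₂. -/

import Mathlib

open Filter MeasureTheory Set

/-- Signed power: for exponents that are quotients of odd positive integers,
`x ^ p` preserves the sign of `x`. -/
noncomputable def opow (x p : ℝ) : ℝ := Real.sign x * |x| ^ p

/-- `L₁y = r₁ · (y')^α`. -/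
noncomputable def L1 (r₁ : ℝ → ℝ) (α : ℝ) (y : ℝ → ℝ) : ℝ → ℝ :=
  fun t => r₁ t * opow (deriv y t) α

/-- `L₂y = r₂ · ((L₁y)')^β`. -/
noncomputable def L2 (r₁ r₂ : ℝ → ℝ) (α β : ℝ) (y : ℝ → ℝ) : ℝ → ℝ :=
  fun t => r₂ t * opow (deriv (L1 r₁ α y) t) β

/-- `L₃y = (L₂y)'`. -/
noncomputable def L3 (r₁ r₂ : ℝ → ℝ) (α β : ℝ) (y : ℝ → ℝ) : ℝ → ℝ :=
  deriv (L2 r₁ r₂ α β y)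

/-- A real number which is a quotient of odd positive integers. -/
def OddQuotient (x : ℝ) : Prop :=
  ∃ m n : ℕ, Odd m ∧ Odd n ∧ 0 < m ∧ 0 < n ∧ x = (m : ℝ) / (n : ℝ)

/-- The standing hypotheses (H1)–(H4). -/
structure Hyp (t₀ α β γ : ℝ) (r₁ r₂ q σ : ℝ → ℝ) : Prop where
  ht₀ : 0 < t₀
  hα : OddQuotient α
  hβ : OddQuotient β
  hγ : OddQuotient γ
  hr₁c : ContinuousOn r₁ (Set.Ici t₀)
  hr₂c : ContinuousOn r₂ (Set.Ici t₀)
  hr₁p : ∀ t, t₀ ≤ t → 0 < r₁ t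
  hr₂p : ∀ t, t₀ ≤ t → 0 < r₂ t
  /-- noncanonical: `π₁(t₀) = ∫_{t₀}^∞ r₁^{-1/α} < ∞` -/
  hπ₁fin : IntegrableOn (fun s => r₁ s ^ (-(1/α))) (Set.Ici t₀)
  /-- noncanonical: `π₂(t₀) = ∫_{t₀}^∞ r₂^{-1/β} < ∞` -/
  hπ₂fin : IntegrableOn (fun s => r₂ s ^ (-(1/β))) (Set.Ici t₀)
  hqc : ContinuousOn q (Set.Ici t₀)
  hq0 : ∀ t, t₀ ≤ t → 0 ≤ q t
  /-- `q` does not vanish eventually -/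
  hqnv : ∀ T, t₀ ≤ T → ∃ t, T ≤ t ∧ q t ≠ 0
  hσd : DifferentiableOn ℝ σ (Set.Ici t₀)
  hσd' : ContinuousOn (deriv σ) (Set.Ici t₀)
  hσpos : ∀ t, t₀ ≤ t → 0 < σ t
  hσadv : ∀ t, t₀ ≤ t → t ≤ σ t
  hσmono : ∀ t, t₀ ≤ t → 0 ≤ deriv σ t

/-- `y` is a (nontrivial) solution of equation (E) on some half-line `[T,∞) ⊆ [t₀,∞)`. -/
def IsSolution (t₀ α β γ : ℝ) (r₁ r₂ q σ y : ℝ → ℝ) : Prop :=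
  ∃ T, t₀ ≤ T ∧
    ContinuousOn y (Set.Ici T) ∧
    DifferentiableOn ℝ y (Set.Ici T) ∧
    ContinuousOn (L1 r₁ α y) (Set.Ici T) ∧
    DifferentiableOn ℝ (L1 r₁ α y) (Set.Ici T) ∧
    ContinuousOn (L2 r₁ r₂ α β y) (Set.Ici T) ∧
    DifferentiableOn ℝ (L2 r₁ r₂ α β y) (Set.Ici T) ∧
    (∀ t, T ≤ t → L3 r₁ r₂ α β y t + q t * opow (y (σ t)) γ = 0) ∧
    (∀ T', T ≤ T' → ∃ t, T' ≤ t ∧ y t ≠ 0)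

/-- A function is oscillatory if it has arbitrarily large zeros. -/
def Oscillatory (y : ℝ → ℝ) : Prop := ∀ T : ℝ, ∃ t, T ≤ t ∧ y t = 0

/-- Equation (E) has property A: every solution is oscillatory or tends to `0`. -/
def PropertyA (t₀ α β γ : ℝ) (r₁ r₂ q σ : ℝ → ℝ) : Prop :=
  ∀ y : ℝ → ℝ, IsSolution t₀ α β γ r₁ r₂ q σ y →
    Oscillatory y ∨ Filter.Tendsto y Filter.atTop (nhds 0)

/-- Equation (E) is oscillatory: every solution is oscillatory. -/
def OscillatoryEq (t₀ α β γ : ℝ) (r₁ r₂ q σ : ℝ → ℝ) : Prop :=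
  ∀ y : ℝ → ℝ, IsSolution t₀ α β γ r₁ r₂ q σ y → Oscillatory y

/-- `π₁(t) = ∫_t^∞ r₁(s)^{-1/α} ds`. -/
noncomputable def pi1 (r₁ : ℝ → ℝ) (α : ℝ) (t : ℝ) : ℝ :=
  ∫ s in Set.Ioi t, r₁ s ^ (-(1/α))

/-- `π₂(t) = ∫_t^∞ r₂(s)^{-1/β} ds`. -/
noncomputable def pi2 (r₂ : ℝ → ℝ) (β : ℝ) (t : ℝ) : ℝ :=
  ∫ s in Set.Ioi t, r₂ s ^ (-(1/β))

/-- `π(t) = ∫_t^∞ r₁(s)^{-1/α} · π₂(s)^{1/α} ds`. -/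
noncomputable def piInf (r₁ r₂ : ℝ → ℝ) (α β : ℝ) (t : ℝ) : ℝ :=
  ∫ s in Set.Ioi t, r₁ s ^ (-(1/α)) * (pi2 r₂ β s) ^ (1/α)

/-- The class `S₁`: `y > 0, L₁y < 0, L₂y < 0, L₃y < 0` on `[t₁,∞)`. -/
def InS1 (r₁ r₂ : ℝ → ℝ) (α β : ℝ) (y : ℝ → ℝ) (t₁ : ℝ) : Prop :=
  ∀ t, t₁ ≤ t → 0 < y t ∧ L1 r₁ α y t < 0 ∧ L2 r₁ r₂ α β y t < 0 ∧ L3 r₁ r₂ α β y t < 0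

/-- The class `S₂`: `y > 0, L₁y < 0, L₂y > 0, L₃y < 0` on `[t₁,∞)`. -/
def InS2 (r₁ r₂ : ℝ → ℝ) (α β : ℝ) (y : ℝ → ℝ) (t₁ : ℝ) : Prop :=
  ∀ t, t₁ ≤ t → 0 < y t ∧ L1 r₁ α y t < 0 ∧ 0 < L2 r₁ r₂ α β y t ∧ L3 r₁ r₂ α β y t < 0

/-- The class `S₃`: `y > 0, L₁y > 0, L₂y > 0, L₃y < 0` on `[t₁,∞)`. -/
def InS3 (r₁ r₂ : ℝ → ℝ) (α β : ℝ) (y : ℝ → ℝ) (t₁ : ℝ) : Prop :=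
  ∀ t, t₁ ≤ t → 0 < y t ∧ 0 < L1 r₁ α y t ∧ 0 < L2 r₁ r₂ α β y t ∧ L3 r₁ r₂ α β y t < 0

/-- The class `S₄`: `y > 0, L₁y > 0, L₂y < 0, L₃y < 0` on `[t₁,∞)`. -/
def InS4 (r₁ r₂ : ℝ → ℝ) (α β : ℝ) (y : ℝ → ℝ) (t₁ : ℝ) : Prop :=
  ∀ t, t₁ ≤ t → 0 < y t ∧ 0 < L1 r₁ α y t ∧ L2 r₁ r₂ α β y t < 0 ∧ L3 r₁ r₂ α β y t < 0

lemma aux_tail (f : ℝ → ℝ) (a : ℝ) (hi : IntegrableOn f (Ioi a)) (hc : ContinuousOn f (Ioi a)) :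
    (∀ t, a < t → HasDerivAt (fun t => ∫ s in Ioi t, f s) (-f t) t) ∧
    Tendsto (fun t => ∫ s in Ioi t, f s) atTop (nhds 0) := by
  have key : ∀ t, a < t → (∫ s in Ioi t, f s) = (∫ s in Ioi a, f s) - ∫ s in a..t, f s := by
    intro t ht
    rw [← intervalIntegral.integral_Ioi_sub_Ioi hi ht.le]; ring
  constructor
  · intro t ht
    have hint : IntervalIntegrable f volume a t := by
      rw [intervalIntegrable_iff_integrableOn_Ioc_of_le ht.le]
      exact hi.mono_set Ioc_subset_Ioi_self
    have h1 : HasDerivAt (fun u => ∫ s in a..u, f s) (f t) t :=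
      intervalIntegral.integral_hasDerivAt_right hint
        (hc.stronglyMeasurableAtFilter isOpen_Ioi t ht) (hc.continuousAt (Ioi_mem_nhds ht))
    have h2 := h1.const_sub (∫ s in Ioi a, f s)
    refine h2.congr_of_eventuallyEq ?_
    filter_upwards [Ioi_mem_nhds ht] with u hu using key u hu
  · have h1 := intervalIntegral_tendsto_integral_Ioi a hi tendsto_id
    have h2 := h1.const_sub (∫ s in Ioi a, f s)
    rw [sub_self] at h2
    refine h2.congr' ?_
    filter_upwards [Ioi_mem_atTop a] with u hu using (key u hu).symm

lemma aux_neg (r x p : ℝ) (hr : 0 < r) (hp : 0 < p) (h : r * opow x p < 0) :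
    x = -((-(r * opow x p)) ^ (1/p) * r ^ (-(1/p))) := by
  have h0 : opow x p < 0 := by
    by_contra hh
    exact absurd h (not_lt.2 (mul_nonneg hr.le (not_lt.1 hh)))
  have hx : x < 0 := by
    by_contra hh
    rcases (not_lt.1 hh).eq_or_lt with h1 | h1
    · rw [← h1] at h0; simp [opow] at h0
    · rw [opow, Real.sign_of_pos h1, one_mul] at h0
      exact absurd h0 (not_lt.2 (by positivity))
  have hx' : 0 < -x := by linarith
  have : -(r * opow x p) = r * (-x) ^ p := by
    rw [opow, Real.sign_of_neg hx, abs_of_neg hx]; ring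
  rw [this, Real.mul_rpow hr.le (by positivity), ← Real.rpow_mul hx'.le,
    mul_one_div_cancel hp.ne', Real.rpow_one, Real.rpow_neg hr.le]
  have := (Real.rpow_pos_of_pos hr (1/p)).ne'
  field_simp

lemma aux_pos (r x p : ℝ) (hr : 0 < r) (hp : 0 < p) (h : 0 < r * opow x p) :
    x = (r * opow x p) ^ (1/p) * r ^ (-(1/p)) := by
  have e : opow (-x) p = - opow x p := by
    rw [opow, opow, Real.sign_neg, abs_neg]; ring
  have := aux_neg r (-x) p hr hp (by rw [e]; linarith)
  rw [e] at this
  simp only [mul_neg, neg_neg] at this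
  linarith

lemma aux_odd {x : ℝ} (h : OddQuotient x) : 0 < x := by
  obtain ⟨m, n, -, -, hm, hn, rfl⟩ := h
  positivity

/-- nonincreasing function bounded below by something tending to `0` is nonnegative -/
lemma aux_mono (f f' g : ℝ → ℝ) (a : ℝ) (hd : ∀ t, a < t → HasDerivAt f (f' t) t)
    (hf : ∀ t, a < t → f' t ≤ 0) (hg : Tendsto g atTop (nhds 0)) (hfg : ∀ t, a < t → g t ≤ f t) :
    ∀ t, a < t → 0 ≤ f t := by
  have anti : AntitoneOn f (Ioi a) := by
    refine antitoneOn_of_deriv_nonpos (convex_Ioi a)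
      (fun t ht => (hd t ht).continuousAt.continuousWithinAt)
      (fun t ht => ?_) (fun t ht => ?_)
    · rw [interior_Ioi] at ht; exact (hd t ht).differentiableAt.differentiableWithinAt
    · rw [interior_Ioi] at ht; rw [(hd t ht).deriv]; exact hf t ht
  intro t ht
  refine le_of_tendsto hg ?_
  filter_upwards [Ici_mem_atTop t] with s hs
  exact (hfg s (lt_of_lt_of_le ht hs)).trans (anti ht (lt_of_lt_of_le ht hs) hs)

/-- a positive nonincreasing function which is not eventually above a positive constant is
eventually small -/
lemma aux_small (f f' : ℝ → ℝ) (a : ℝ) (hd : ∀ t, a < t → HasDerivAt f (f' t) t)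
    (hf : ∀ t, a < t → f' t ≤ 0) (hno : ∀ c > 0, ¬ ∀ t, a < t → c ≤ f t) :
    ∀ c > 0, ∃ b, a < b ∧ ∀ t, b ≤ t → f t ≤ c := by
  have anti : AntitoneOn f (Ioi a) := by
    refine antitoneOn_of_deriv_nonpos (convex_Ioi a)
      (fun t ht => (hd t ht).continuousAt.continuousWithinAt)
      (fun t ht => ?_) (fun t ht => ?_)
    · rw [interior_Ioi] at ht; exact (hd t ht).differentiableAt.differentiableWithinAt
    · rw [interior_Ioi] at ht; rw [(hd t ht).deriv]; exact hf t ht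
  intro c hc
  have := hno c hc
  push Not at this
  obtain ⟨b, hb, hb'⟩ := this
  exact ⟨b, hb, fun t ht => (anti hb (lt_of_lt_of_le hb ht) ht).trans hb'.le⟩

theorem S2_upper_bound (t₀ α β γ t₁ : ℝ) (r₁ r₂ q σ y : ℝ → ℝ)
    (H : Hyp t₀ α β γ r₁ r₂ q σ)
    (hy : IsSolution t₀ α β γ r₁ r₂ q σ y)
    (ht₁ : t₀ ≤ t₁)
    (hS2 : InS2 r₁ r₂ α β y t₁)
    (hdiv : Filter.Tendsto (fun t => ∫ s in t₀..t, q s * (piInf r₁ r₂ α β (σ s)) ^ γ)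
      Filter.atTop Filter.atTop) :
    ∀ k : ℝ, 0 < k → ∃ t₂, t₁ ≤ t₂ ∧ ∀ t, t₂ ≤ t → y t ≤ k * piInf r₁ r₂ α β t := by
  have hα := aux_odd H.hα
  have hβ := aux_odd H.hβ
  have hγ := aux_odd H.hγ
  obtain ⟨T, hT, -, hyd, -, hL1d, -, hL2d, heq, -⟩ := hy
  -- the weights
  have hc1 : ContinuousOn (fun s => r₁ s ^ (-(1/α))) (Ioi t₀) := fun s hs =>
    ((H.hr₁c s (Ioi_subset_Ici_self hs)).mono Ioi_subset_Ici_self).rpow_const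
      (Or.inl (H.hr₁p s (le_of_lt hs)).ne')
  have hc2 : ContinuousOn (fun s => r₂ s ^ (-(1/β))) (Ioi t₀) := fun s hs =>
    ((H.hr₂c s (Ioi_subset_Ici_self hs)).mono Ioi_subset_Ici_self).rpow_const
      (Or.inl (H.hr₂p s (le_of_lt hs)).ne')
  have hi1 := H.hπ₁fin.mono_set (Ioi_subset_Ici_self (a := t₀))
  have hi2 := H.hπ₂fin.mono_set (Ioi_subset_Ici_self (a := t₀))
  have w1 : ∀ s, t₀ < s → 0 ≤ r₁ s ^ (-(1/α)) := fun s hs =>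
    Real.rpow_nonneg (H.hr₁p s hs.le).le _
  have w2 : ∀ s, t₀ < s → 0 ≤ r₂ s ^ (-(1/β)) := fun s hs =>
    Real.rpow_nonneg (H.hr₂p s hs.le).le _
  obtain ⟨dP2, tP2⟩ := aux_tail _ t₀ hi2 hc2
  change ∀ t, t₀ < t → HasDerivAt (pi2 r₂ β) (-(r₂ t ^ (-(1/β)))) t at dP2
  change Tendsto (pi2 r₂ β) atTop (nhds 0) at tP2
  have P2nn : ∀ t, t₀ ≤ t → 0 ≤ pi2 r₂ β t := fun t ht =>
    setIntegral_nonneg measurableSet_Ioi (fun s hs => w2 s (lt_of_le_of_lt ht hs))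
  have P2le : ∀ t, t₀ < t → pi2 r₂ β t ≤ pi2 r₂ β t₀ := fun t ht => by
    refine setIntegral_mono_set hi2 ?_ (Ioi_subset_Ioi ht.le).eventuallyLE
    exact (ae_restrict_iff' measurableSet_Ioi).2 (Eventually.of_forall w2)
  have hcw : ContinuousOn (fun s => r₁ s ^ (-(1/α)) * (pi2 r₂ β s) ^ (1/α)) (Ioi t₀) :=
    hc1.mul (fun s hs => ((dP2 s hs).continuousAt.continuousWithinAt).rpow_const
      (Or.inr (by positivity)))
  have hiw : IntegrableOn (fun s => r₁ s ^ (-(1/α)) * (pi2 r₂ β s) ^ (1/α)) (Ioi t₀) := by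
    refine Integrable.mono' (hi1.mul_const ((pi2 r₂ β t₀) ^ (1/α)))
      (hcw.aestronglyMeasurable measurableSet_Ioi) ?_
    refine (ae_restrict_iff' measurableSet_Ioi).2 (Eventually.of_forall fun s hs => ?_)
    have h1 := Real.rpow_nonneg (P2nn s (le_of_lt hs)) (1/α)
    rw [Real.norm_of_nonneg (mul_nonneg (w1 s hs) h1)]
    exact mul_le_mul_of_nonneg_left
      (Real.rpow_le_rpow (P2nn s (le_of_lt hs)) (P2le s hs) (by positivity)) (w1 s hs)
  have ww : ∀ s, t₀ < s → 0 ≤ r₁ s ^ (-(1/α)) * (pi2 r₂ β s) ^ (1/α) := fun s hs =>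
    mul_nonneg (w1 s hs) (Real.rpow_nonneg (P2nn s hs.le) _)
  obtain ⟨dP, tP⟩ := aux_tail _ t₀ hiw hcw
  change ∀ t, t₀ < t → HasDerivAt (piInf r₁ r₂ α β)
    (-(r₁ t ^ (-(1/α)) * (pi2 r₂ β t) ^ (1/α))) t at dP
  change Tendsto (piInf r₁ r₂ α β) atTop (nhds 0) at tP
  have Pnn : ∀ t, t₀ ≤ t → 0 ≤ piInf r₁ r₂ α β t := fun t ht =>
    setIntegral_nonneg measurableSet_Ioi (fun s hs => ww s (lt_of_le_of_lt ht hs))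
  have Ple : ∀ t, t₀ < t → piInf r₁ r₂ α β t ≤ piInf r₁ r₂ α β t₀ := fun t ht => by
    refine setIntegral_mono_set hiw ?_ (Ioi_subset_Ioi ht.le).eventuallyLE
    exact (ae_restrict_iff' measurableSet_Ioi).2 (Eventually.of_forall ww)
  -- derivatives along the solution
  obtain ⟨M, hMT, hM1⟩ : ∃ M, T ≤ M ∧ t₁ ≤ M := ⟨max T t₁, le_max_left _ _, le_max_right _ _⟩
  have hM0 : t₀ ≤ M := hT.trans hMT
  have dy : ∀ t, M < t → HasDerivAt y
      (-((-(L1 r₁ α y t)) ^ (1/α) * r₁ t ^ (-(1/α)))) t := fun t ht => by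
    have := (hyd.differentiableAt (Ici_mem_nhds (hMT.trans_lt ht))).hasDerivAt
    have e := aux_neg (r₁ t) (deriv y t) α (H.hr₁p t (hM0.trans ht.le)) hα
      (hS2 t (hM1.trans ht.le)).2.1
    rw [e] at this
    exact this
  have dL1 : ∀ t, M < t → HasDerivAt (L1 r₁ α y)
      ((L2 r₁ r₂ α β y t) ^ (1/β) * r₂ t ^ (-(1/β))) t := fun t ht => by
    have := (hL1d.differentiableAt (Ici_mem_nhds (hMT.trans_lt ht))).hasDerivAt
    have e := aux_pos (r₂ t) (deriv (L1 r₁ α y) t) β (H.hr₂p t (hM0.trans ht.le)) hβ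
      (hS2 t (hM1.trans ht.le)).2.2.1
    rw [e] at this
    exact this
  have dL2 : ∀ t, M < t → HasDerivAt (L2 r₁ r₂ α β y) (-(q t * y (σ t) ^ γ)) t := fun t ht => by
    have := (hL2d.differentiableAt (Ici_mem_nhds (hMT.trans_lt ht))).hasDerivAt
    have e := heq t (hMT.trans ht.le)
    have hp := (hS2 (σ t) ((hM1.trans ht.le).trans (H.hσadv t (hM0.trans ht.le)))).1
    rw [opow, Real.sign_of_pos hp, abs_of_pos hp, one_mul] at e
    have e2 : deriv (L2 r₁ r₂ α β y) t = -(q t * y (σ t) ^ γ) := by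
      change L3 r₁ r₂ α β y t = _
      linarith
    rwa [e2] at this
  have yp : ∀ t, M < t → 0 < y t := fun t ht => (hS2 t (hM1.trans ht.le)).1
  have L1n : ∀ t, M < t → L1 r₁ α y t < 0 := fun t ht => (hS2 t (hM1.trans ht.le)).2.1
  have L2p : ∀ t, M < t → 0 < L2 r₁ r₂ α β y t := fun t ht => (hS2 t (hM1.trans ht.le)).2.2.1
  have σlt : ∀ t, M < t → M < σ t := fun t ht => ht.trans_le (H.hσadv t (hM0.trans ht.le))
  -- key contradiction
  have K : ∀ c > 0, ¬ ∀ t, M < t → c * piInf r₁ r₂ α β t ≤ y t := by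
    intro c hc hcy
    set g : ℝ → ℝ := fun s => q s * (piInf r₁ r₂ α β (σ s)) ^ γ with hg
    have hgi : ∀ t, t₀ ≤ t → IntervalIntegrable g volume t₀ t := by
      intro t ht
      obtain ⟨u, hu1, hu2⟩ := ((hdiv.eventually_gt_atTop 0).and (eventually_ge_atTop t)).exists
      have : IntervalIntegrable g volume t₀ u := by
        by_contra hh
        rw [intervalIntegral.integral_undef hh] at hu1
        exact lt_irrefl _ hu1
      refine this.mono_set ?_
      rw [uIcc_of_le ht, uIcc_of_le (ht.trans hu2)]
      exact Icc_subset_Icc_right hu2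
    have hgc : ContinuousOn g (Ioi t₀) := by
      intro t ht
      refine ((H.hqc t (Ioi_subset_Ici_self ht)).mono Ioi_subset_Ici_self).mul ?_
      have h1 : ContinuousAt σ t :=
        (H.hσd.differentiableAt (Ici_mem_nhds ht)).continuousAt
      have h2 : ContinuousAt (piInf r₁ r₂ α β) (σ t) :=
        (dP (σ t) (lt_of_lt_of_le ht (H.hσadv t (le_of_lt ht)))).continuousAt
      exact ((ContinuousAt.comp h2 h1).rpow_const (Or.inr hγ.le)).continuousWithinAt
    have dG : ∀ t, M < t → HasDerivAt (fun u => ∫ s in t₀..u, g s) (g t) t := fun t ht =>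
      have ht' : t₀ < t := hM0.trans_lt ht
      intervalIntegral.integral_hasDerivAt_right (hgi t ht'.le)
        (hgc.stronglyMeasurableAtFilter isOpen_Ioi t ht') (hgc.continuousAt (Ioi_mem_nhds ht'))
    set f : ℝ → ℝ := fun t => L2 r₁ r₂ α β y t + c ^ γ * ∫ s in t₀..t, g s with hf
    have df : ∀ t, M < t → HasDerivAt f (-(q t * y (σ t) ^ γ) + c ^ γ * g t) t := fun t ht =>
      (dL2 t ht).add ((dG t ht).const_mul _)
    have hle : ∀ t, M < t → -(q t * y (σ t) ^ γ) + c ^ γ * g t ≤ 0 := by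
      intro t ht
      have hPσ := Pnn (σ t) (hM0.trans (σlt t ht).le)
      have h1 : (c * piInf r₁ r₂ α β (σ t)) ^ γ ≤ y (σ t) ^ γ :=
        Real.rpow_le_rpow (mul_nonneg hc.le hPσ) (hcy _ (σlt t ht)) hγ.le
      rw [Real.mul_rpow hc.le hPσ] at h1
      have h2 := mul_le_mul_of_nonneg_left h1 (H.hq0 t (hM0.trans ht.le))
      simp only [hg]
      linarith
    have hno : ∀ a > 0, ∃ b, M < b ∧ ∀ t, b ≤ t → f t ≤ a + f (M + 1) := by
      intro a ha
      have anti : AntitoneOn f (Ioi M) := by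
        refine antitoneOn_of_deriv_nonpos (convex_Ioi M)
          (fun t ht => (df t ht).continuousAt.continuousWithinAt)
          (fun t ht => ?_) (fun t ht => ?_)
        · rw [interior_Ioi] at ht; exact (df t ht).differentiableAt.differentiableWithinAt
        · rw [interior_Ioi] at ht; rw [(df t ht).deriv]; exact hle t ht
      refine ⟨M + 1, by linarith, fun t ht => ?_⟩
      have h1 : M + 1 ∈ Ioi M := by simp
      have := anti h1 (lt_of_lt_of_le h1 ht) ht
      linarith
    obtain ⟨b, hb, hb'⟩ := hno 1 one_pos
    have hinf := (hdiv.const_mul_atTop (Real.rpow_pos_of_pos hc γ))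
    obtain ⟨u, hu1, hu2⟩ := ((hinf.eventually_gt_atTop (1 + f (M + 1))).and
      (eventually_ge_atTop b)).exists
    have h1 := hb' u hu2
    have h2 := L2p u (hb.trans_le hu2)
    have h3 : f u = L2 r₁ r₂ α β y u + c ^ γ * ∫ s in t₀..u, g s := rfl
    linarith
  -- comparison from below
  have cmp : ∀ c > 0, ¬ ∀ t, M < t → c * pi2 r₂ β t ≤ -L1 r₁ α y t := by
    intro c hc hcL
    refine K (c ^ (1/α)) (by positivity) fun t ht => ?_
    have := aux_mono (fun t => y t - c ^ (1/α) * piInf r₁ r₂ α β t) _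
      (fun t => - (c ^ (1/α) * piInf r₁ r₂ α β t)) M
      (fun t ht => (dy t ht).sub ((dP t (hM0.trans_lt ht)).const_mul (c ^ (1/α))))
      (fun s hs => ?_) (by simpa using (tP.const_mul (c ^ (1/α))).neg)
      (fun s hs => by have := yp s hs; linarith) t ht
    · linarith
    · have hs0 := hM0.trans_lt hs
      have h1 := Real.rpow_le_rpow (mul_nonneg hc.le (P2nn s hs0.le)) (hcL s hs)
        (by positivity : 0 ≤ 1/α)
      rw [Real.mul_rpow hc.le (P2nn s hs0.le)] at h1
      have h2 := mul_le_mul_of_nonneg_right h1 (w1 s hs0)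
      linarith
  have sy := aux_small y _ M dy
    (fun t ht => neg_nonpos.2 (mul_nonneg (Real.rpow_nonneg (by linarith [L1n t ht]) _)
      (w1 t (hM0.trans_lt ht)))) (fun c hc h => by
      have hp0 := Pnn t₀ le_rfl
      refine K (c / (piInf r₁ r₂ α β t₀ + 1)) (by positivity) fun t ht => ?_
      refine le_trans ?_ (h t ht)
      rw [div_mul_eq_mul_div, div_le_iff₀ (by positivity)]
      have := Ple t (hM0.trans_lt ht)
      exact mul_le_mul_of_nonneg_left (by linarith) hc.le)
  have sL1 := aux_small (fun t => -L1 r₁ α y t) _ M (fun t ht => (dL1 t ht).neg)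
    (fun t ht => neg_nonpos.2 (mul_nonneg (Real.rpow_nonneg (L2p t ht).le _)
      (w2 t (hM0.trans_lt ht)))) (fun c hc h => by
      have hp0 := P2nn t₀ le_rfl
      refine cmp (c / (pi2 r₂ β t₀ + 1)) (by positivity) fun t ht => ?_
      refine le_trans ?_ (h t ht)
      rw [div_mul_eq_mul_div, div_le_iff₀ (by positivity)]
      have := P2le t (hM0.trans_lt ht)
      exact mul_le_mul_of_nonneg_left (by linarith) hc.le)
  have sL2 := aux_small _ _ M dL2
    (fun t ht => neg_nonpos.2 (mul_nonneg (H.hq0 t (hM0.trans ht.le))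
      (Real.rpow_nonneg (yp _ (σlt t ht)).le _))) (fun c hc h => by
      refine cmp (c ^ (1/β)) (by positivity) fun t ht => ?_
      have := aux_mono (fun t => -L1 r₁ α y t - c ^ (1/β) * pi2 r₂ β t) _
        (fun t => - (c ^ (1/β) * pi2 r₂ β t)) M
        (fun t ht => (dL1 t ht).neg.sub ((dP2 t (hM0.trans_lt ht)).const_mul (c ^ (1/β))))
        (fun s hs => ?_) (by simpa using (tP2.const_mul (c ^ (1/β))).neg)
        (fun s hs => by have := L1n s hs; linarith) t ht
      · linarith
      · have h1 := Real.rpow_le_rpow hc.le (h s hs) (by positivity : 0 ≤ 1/β)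
        have h2 := mul_le_mul_of_nonneg_right h1 (w2 s (hM0.trans_lt hs))
        linarith)
  have ty : Tendsto y atTop (nhds 0) := by
    rw [Metric.tendsto_atTop]
    intro ε hε
    obtain ⟨b, hb, h⟩ := sy (ε/2) (by linarith)
    refine ⟨b, fun t ht => ?_⟩
    rw [Real.dist_eq, sub_zero, abs_of_pos (yp t (hb.trans_le ht))]
    linarith [h t ht]
  have tL1 : Tendsto (L1 r₁ α y) atTop (nhds 0) := by
    rw [Metric.tendsto_atTop]
    intro ε hε
    obtain ⟨b, hb, h⟩ := sL1 (ε/2) (by linarith)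
    refine ⟨b, fun t ht => ?_⟩
    rw [Real.dist_eq, sub_zero, abs_of_neg (L1n t (hb.trans_le ht))]
    linarith [h t ht]
  -- conclusion
  intro k hk
  obtain ⟨b, hb, hbL⟩ := sL2 ((k ^ α) ^ β) (by positivity)
  have e1 : ((k ^ α) ^ β) ^ (1/β) = k ^ α := by
    rw [← Real.rpow_mul (by positivity), mul_one_div_cancel hβ.ne', Real.rpow_one]
  have e2 : (k ^ α) ^ (1/α) = k := by
    rw [← Real.rpow_mul hk.le, mul_one_div_cancel hα.ne', Real.rpow_one]
  have step1 : ∀ t, b < t → -L1 r₁ α y t ≤ k ^ α * pi2 r₂ β t := by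
    intro t ht
    have := aux_mono (fun t => L1 r₁ α y t + k ^ α * pi2 r₂ β t) _
      (fun t => L1 r₁ α y t + k ^ α * pi2 r₂ β t) b
      (fun t ht => (dL1 t (hb.trans ht)).add
        ((dP2 t (hM0.trans_lt (hb.trans ht))).const_mul (k ^ α)))
      (fun s hs => ?_) (by simpa using tL1.add (tP2.const_mul (k ^ α)))
      (fun s hs => le_rfl) t ht
    · linarith
    · have h1 := Real.rpow_le_rpow (L2p s (hb.trans hs)).le (hbL s (le_of_lt hs))
        (by positivity : 0 ≤ 1/β)
      rw [e1] at h1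
      have h2 := mul_le_mul_of_nonneg_right h1 (w2 s (hM0.trans_lt (hb.trans hs)))
      linarith
  have step2 : ∀ t, b < t → y t ≤ k * piInf r₁ r₂ α β t := by
    intro t ht
    have := aux_mono (fun t => k * piInf r₁ r₂ α β t - y t) _
      (fun t => k * piInf r₁ r₂ α β t - y t) b
      (fun t ht => ((dP t (hM0.trans_lt (hb.trans ht))).const_mul k).sub (dy t (hb.trans ht)))
      (fun s hs => ?_) (by simpa using (tP.const_mul k).sub ty)
      (fun s hs => le_rfl) t ht
    · linarith
    · have hs0 := hM0.trans_lt (hb.trans hs)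
      have h1 := Real.rpow_le_rpow (by linarith [L1n s (hb.trans hs)]) (step1 s hs)
        (by positivity : 0 ≤ 1/α)
      rw [Real.mul_rpow (by positivity) (P2nn s hs0.le), e2] at h1
      have h2 := mul_le_mul_of_nonneg_right h1 (w1 s hs0)
      linarith
  exact ⟨b + 1, by linarith, fun t ht => step2 t (by linarith)⟩
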